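/- Let Γ = ((V,E),(V₁,V₂)) be a game graph with GR(1) objective given by target sets L₁,…,L_{k₁} and U₁,…,U_{k₂}. Every player-2 dominion D of Γ (with respect to the GR(1) objective) contains a subset D' ⊆ D that is a player-2 dominion with D' ∩ U_ℓ = ∅ for some 1 ≤ ℓ ≤ k₂. -/

import Mathlib

open Classical

universe u

/-- A game graph: a directed graph `E` on vertex set `V` together with the set
`P1` of player-1 vertices; player-2 vertices are the complement of `P1`. -/
structure GameGraph (V : Type u) where
  E : V → V → Prop
  P1 : Set V

/-- The two players. -/
inductive Player : Type where
  | one : Player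
  | two : Player

/-- The opponent of a player. -/
def Player.opp : Player → Player
  | .one => .two
  | .two => .one

/-- Select the first argument for player 1 and the second for player 2. -/
def Player.sel {α : Sort*} : Player → α → α → α
  | .one, a, _ => a
  | .two, _, b => b

variable {V : Type u}

/-- The vertices belonging to a player. -/
def GameGraph.verts (Γ : GameGraph V) : Player → Set V
  | .one => Γ.P1
  | .two => Γ.P1ᶜ

/-- Every vertex has at least one outgoing edge. -/
def GameGraph.NoDead (Γ : GameGraph V) : Prop := ∀ v, ∃ w, Γ.E v w

/-- A (general, history-dependent) strategy: given the history of the play so far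
(the vertices visited strictly before the current one) and the current vertex,
choose a next vertex. -/
abbrev Strat (V : Type u) : Type u := List V → V → V

/-- A strategy is memoryless if it depends only on the current vertex. -/
def Memoryless (σ : Strat V) : Prop := ∀ h h' v, σ h v = σ h' v

/-- A strategy is valid for player `p` if at every vertex of player `p` it
chooses a successor of that vertex. -/
def GameGraph.ValidFor (Γ : GameGraph V) (p : Player) (σ : Strat V) : Prop :=
  ∀ hist v, v ∈ Γ.verts p → Γ.E v (σ hist v)

/-- One step of the play: the player-1 strategy moves at `P1`-vertices, the
player-2 strategy elsewhere. -/
noncomputable def GameGraph.step (Γ : GameGraph V) (σ π : Strat V)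
    (hist : List V) (v : V) : V :=
  if v ∈ Γ.P1 then σ hist v else π hist v

/-- The play determined by a start vertex `v`, a player-1 strategy `σ` and a
player-2 strategy `π`, together with its history. -/
noncomputable def GameGraph.playAux (Γ : GameGraph V) (σ π : Strat V) (v : V) :
    ℕ → List V × V
  | 0 => ([], v)
  | n + 1 =>
      let q := Γ.playAux σ π v n
      (q.1 ++ [q.2], Γ.step σ π q.1 q.2)

/-- The play determined by a start vertex `v`, a player-1 strategy `σ` and a
player-2 strategy `π`. -/
noncomputable def GameGraph.play (Γ : GameGraph V) (σ π : Strat V) (v : V)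
    (n : ℕ) : V :=
  (Γ.playAux σ π v n).2

/-- The play from `v` where player `p` uses strategy `σ` and the opponent uses
strategy `τ`. -/
noncomputable def GameGraph.winPlay (Γ : GameGraph V) (p : Player)
    (σ τ : Strat V) (v : V) : ℕ → V :=
  Γ.play (p.sel σ τ) (p.sel τ σ) v

/-- Player `p` wins from `v` for objective `Ω`: player 1 wants the resulting
play to lie in `Ω`, player 2 wants it to lie outside `Ω`. -/
def GameGraph.Wins (Γ : GameGraph V) (p : Player) (Ω : Set (ℕ → V)) (v : V) :
    Prop :=
  ∃ σ, Γ.ValidFor p σ ∧ ∀ τ, Γ.ValidFor p.opp τ →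
    p.sel (Γ.winPlay p σ τ v ∈ Ω) (Γ.winPlay p σ τ v ∉ Ω)

/-- A player-`p` dominion for objective `Ω`: a nonempty set from each of whose
vertices player `p` has a winning strategy that moreover keeps the play inside
the set. -/
def GameGraph.Dominion (Γ : GameGraph V) (p : Player) (Ω : Set (ℕ → V))
    (D : Set V) : Prop :=
  D.Nonempty ∧ ∀ v ∈ D, ∃ σ, Γ.ValidFor p σ ∧ ∀ τ, Γ.ValidFor p.opp τ →
    (p.sel (Γ.winPlay p σ τ v ∈ Ω) (Γ.winPlay p σ τ v ∉ Ω)) ∧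
    ∀ n, Γ.winPlay p σ τ v n ∈ D

/-- The player-`p` attractor of `U`: the least set containing `U`, every
player-`p` vertex with some successor in it, and every opponent vertex all of
whose successors are in it. -/
inductive GameGraph.Attr (Γ : GameGraph V) (p : Player) (U : Set V) : V → Prop
  | base {v} : v ∈ U → GameGraph.Attr Γ p U v
  | own {v w} : v ∈ Γ.verts p → Γ.E v w → GameGraph.Attr Γ p U w →
      GameGraph.Attr Γ p U v
  | opp {v} : v ∈ Γ.verts p.opp → (∀ w, Γ.E v w → GameGraph.Attr Γ p U w) →
      GameGraph.Attr Γ p U v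

/-- The player-`p` attractor, as a set. -/
def GameGraph.attr (Γ : GameGraph V) (p : Player) (U : Set V) : Set V :=
  {v | Γ.Attr p U v}

/-- The iterative construction `R_j` of the player-`p` attractor. -/
def GameGraph.attrIter (Γ : GameGraph V) (p : Player) (U : Set V) : ℕ → Set V
  | 0 => U
  | n + 1 =>
      Γ.attrIter p U n
        ∪ {v | v ∈ Γ.verts p ∧ ∃ w, Γ.E v w ∧ w ∈ Γ.attrIter p U n}
        ∪ {v | v ∈ Γ.verts p.opp ∧ ∀ w, Γ.E v w → w ∈ Γ.attrIter p U n}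

/-- The `p`-rank of `v` with respect to `U`: the least `j` with `v ∈ R_j`, and
`∞` if there is no such `j`. -/
noncomputable def GameGraph.rank (Γ : GameGraph V) (p : Player) (U : Set V)
    (v : V) : ℕ∞ :=
  ⨅ n ∈ {n : ℕ | v ∈ Γ.attrIter p U n}, (n : ℕ∞)

/-- A set `U` is `p`-closed: every player-`p` vertex of `U` has all its
successors in `U`, and every opponent vertex of `U` has some successor in `U`. -/
def GameGraph.PClosed (Γ : GameGraph V) (p : Player) (U : Set V) : Prop :=
  ∀ v ∈ U, (v ∈ Γ.verts p → ∀ w, Γ.E v w → w ∈ U) ∧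
    (v ∈ Γ.verts p.opp → ∃ w, Γ.E v w ∧ w ∈ U)

/-- The induced game graph on a subset `U` of the vertices. -/
def GameGraph.sub (Γ : GameGraph V) (U : Set V) : GameGraph U where
  E a b := Γ.E (a : V) (b : V)
  P1 := {a : U | (a : V) ∈ Γ.P1}

/-- The game graph with the roles of the two players exchanged. -/
def GameGraph.swap (Γ : GameGraph V) : GameGraph V where
  E := Γ.E
  P1 := Γ.P1ᶜ

/-- The set of vertices occurring infinitely often in a play. -/
def InfOcc (ω : ℕ → V) : Set V := {v | ∀ n, ∃ m, n ≤ m ∧ ω m = v}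

/-- An objective is prefix-independent if membership of a play depends only on
the set of vertices visited infinitely often. -/
def PrefixIndep (Ω : Set (ℕ → V)) : Prop :=
  ∀ ω ω', InfOcc ω = InfOcc ω' → (ω ∈ Ω ↔ ω' ∈ Ω)

/-- The Büchi objective with target set `T`. -/
def BuchiObj (T : Set V) : Set (ℕ → V) := {ω | (InfOcc ω ∩ T).Nonempty}

/-- The generalized Büchi objective with target sets `T i`. -/
def GenBuchiObj {ι : Sort*} (T : ι → Set V) : Set (ℕ → V) :=
  {ω | ∀ i, (InfOcc ω ∩ T i).Nonempty}

/-- The disjunctive co-Büchi objective with target sets `T i`. -/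
def DisjCoBuchiObj {ι : Sort*} (T : ι → Set V) : Set (ℕ → V) :=
  {ω | ∃ i, InfOcc ω ∩ T i = ∅}

/-- The GR(1) objective with assumption sets `L t` and guarantee sets `U ℓ`. -/
def GR1Obj {ι₁ ι₂ : Sort*} (L : ι₁ → Set V) (U : ι₂ → Set V) : Set (ℕ → V) :=
  {ω | (∀ t, (InfOcc ω ∩ L t).Nonempty) → ∀ ℓ, (InfOcc ω ∩ U ℓ).Nonempty}

/-- An objective on the full vertex set, restricted to plays of the induced
game graph on `U`. -/
def subObj (U : Set V) (Ω : Set (ℕ → V)) : Set (ℕ → ↥U) :=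
  {ω | (fun n => (ω n : V)) ∈ Ω}

/-- The out-degree of a vertex. -/
noncomputable def GameGraph.outDeg (Γ : GameGraph V) (v : V) : ℕ :=
  {w | Γ.E v w}.ncard

/-- A hierarchical graph decomposition of a game graph `Γ`: for every vertex
`v`, `idx v` enumerates the incoming edges of `v` (i.e., their sources) by the
positions `0, …, indeg(v) − 1`, listing edges from player-2 vertices first. -/
structure HierDecomp (Γ : GameGraph V) where
  idx : V → V → ℕ
  idx_inj : ∀ v u u', Γ.E u v → Γ.E u' v → idx v u = idx v u' → u = u'
  idx_lt : ∀ v u, Γ.E u v → idx v u < {u' | Γ.E u' v}.ncard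
  p2_first : ∀ v u u', Γ.E u v → Γ.E u' v → u ∉ Γ.P1 → u' ∈ Γ.P1 →
      idx v u < idx v u'

/-- The `i`-th level `Γ_i = (G_i, (V₁,V₂))` of the hierarchical graph
decomposition: `G_i` keeps all outgoing edges of vertices of out-degree at most
`2^i`, and the first `2^i` incoming edges of every vertex. -/
def HierDecomp.graph {Γ : GameGraph V} (H : HierDecomp Γ) (i : ℕ) :
    GameGraph V where
  E u v := Γ.E u v ∧ (Γ.outDeg u ≤ 2 ^ i ∨ H.idx v u < 2 ^ i)
  P1 := Γ.P1

/-- The exception set `Z_i`: player-2 vertices with no outgoing edge in `G_i`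
together with player-1 vertices with more than `2^i` outgoing edges in `G`. -/
def HierDecomp.Z {Γ : GameGraph V} (H : HierDecomp Γ) (i : ℕ) : Set V :=
  {v | v ∉ Γ.P1 ∧ ¬ ∃ w, (H.graph i).E v w} ∪
    {v | v ∈ Γ.P1 ∧ 2 ^ i < Γ.outDeg v}

/-- Cyclic successor `ℓ ⊕ 1` on `Fin k`. -/
def finSucc {k : ℕ} (ℓ : Fin k) : Fin k :=
  ⟨(ℓ.val + 1) % k, Nat.mod_lt _ (Nat.lt_of_le_of_lt (Nat.zero_le _) ℓ.isLt)⟩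

/-- The bound `n̄ = min (h − 1) |V ∖ T|` of the progress measure. -/
noncomputable def nbar (h : ℕ) (T : Set V) : ℕ := min (h - 1) Tᶜ.ncard

/-- The value of the best successor of `v` for the player owning `v`. -/
noncomputable def GameGraph.best (Γ : GameGraph V) {k : ℕ} (T : Fin k → Set V)
    (ρ : Fin k → V → ℕ∞) (ℓ : Fin k) (v : V) : ℕ∞ :=
  let ℓ' := if v ∈ T ℓ then finSucc ℓ else ℓ
  if v ∈ Γ.P1 then ⨅ w ∈ {w | Γ.E v w}, ρ ℓ' w
  else ⨆ w ∈ {w | Γ.E v w}, ρ ℓ' w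

/-- The increment operation `incr` of the progress measure (for the pair
`(v, ℓ)`). -/
noncomputable def pmIncr (h : ℕ) {k : ℕ} (T : Fin k → Set V) (ℓ : Fin k)
    (v : V) (x : ℕ∞) : ℕ∞ :=
  if v ∈ T ℓ ∧ x ≠ ⊤ then 0
  else if x < (nbar h (T ℓ) : ℕ∞) then x + 1 else ⊤

/-- The update operator of the progress measure: update `ρ ℓ v` to
`max (ρ ℓ v) (incr (best v))`. -/
noncomputable def GameGraph.pmStep (Γ : GameGraph V) (h : ℕ) {k : ℕ}
    (T : Fin k → Set V) (ρ : Fin k → V → ℕ∞) : Fin k → V → ℕ∞ :=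
  fun ℓ v => max (ρ ℓ v) (pmIncr h T ℓ v (Γ.best T ρ ℓ v))

/-- `ρ` is the progress measure associated with `Γ`, `T` and `h`: the least
fixed point (starting from the all-zero functions, i.e., the least one) of the
update operator. -/
def GameGraph.IsProgressMeasure (Γ : GameGraph V) (h : ℕ) {k : ℕ}
    (T : Fin k → Set V) (ρ : Fin k → V → ℕ∞) : Prop :=
  Γ.pmStep h T ρ = ρ ∧ ∀ ρ', Γ.pmStep h T ρ' = ρ' → ∀ ℓ v, ρ ℓ v ≤ ρ' ℓ v

/-- Player `p` can force, from `v`, that the play stays in `D` forever and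
visits every target set `T i` infinitely often. -/
def GameGraph.ForcesStayBuchi (Γ : GameGraph V) (p : Player) (D : Set V)
    {ι : Sort*} (T : ι → Set V) (v : V) : Prop :=
  ∃ σ, Γ.ValidFor p σ ∧ ∀ τ, Γ.ValidFor p.opp τ →
    (∀ n, Γ.winPlay p σ τ v n ∈ D) ∧
    ∀ i n, ∃ m, n ≤ m ∧ Γ.winPlay p σ τ v m ∈ T i

/-- The history of a play. -/
def gHist (ω : ℕ → V) (n : ℕ) : List V := (List.range n).map ω

/-- Plays from `v` consistent with a player-2 strategy. -/
def GameGraph.Cons (Γ : GameGraph V) (σ : Strat V) (v : V) (ω : ℕ → V) : Prop :=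
  ω 0 = v ∧ ∀ n, Γ.E (ω n) (ω (n + 1)) ∧
    (ω n ∉ Γ.P1 → ω (n + 1) = σ (gHist ω n) (ω n))

theorem gHist_length (ω : ℕ → V) (n : ℕ) : (gHist ω n).length = n := by
  simp [gHist]

theorem gHist_succ (ω : ℕ → V) (n : ℕ) : gHist ω (n + 1) = gHist ω n ++ [ω n] := by
  simp [gHist, List.range_succ]

theorem gHist_congr {ω ω' : ℕ → V} {n : ℕ} (h : ∀ m < n, ω m = ω' m) :
    gHist ω n = gHist ω' n := by
  unfold gHist
  apply List.map_congr_left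
  intro a ha
  exact h a (List.mem_range.1 ha)

theorem playAux_fst (Γ : GameGraph V) (σ π : Strat V) (v : V) (n : ℕ) :
    (Γ.playAux σ π v n).1 = gHist (Γ.play σ π v) n := by
  induction n with
  | zero => simp [GameGraph.playAux, gHist]
  | succ n ih =>
    rw [gHist_succ, ← ih]
    rfl

theorem play_succ (Γ : GameGraph V) (σ π : Strat V) (v : V) (n : ℕ) :
    Γ.play σ π v (n + 1) = Γ.step σ π (gHist (Γ.play σ π v) n) (Γ.play σ π v n) := by
  rw [← playAux_fst]
  rfl

theorem cons_winPlay (Γ : GameGraph V) {σ τ : Strat V} (v : V)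
    (hσ : Γ.ValidFor Player.two σ) (hτ : Γ.ValidFor Player.one τ) :
    Γ.Cons σ v (Γ.winPlay Player.two σ τ v) := by
  show Γ.Cons σ v (Γ.play τ σ v)
  refine ⟨rfl, fun n => ?_⟩
  rw [play_succ]
  unfold GameGraph.step
  by_cases h : Γ.play τ σ v n ∈ Γ.P1
  · simp only [h, if_true]
    exact ⟨hτ _ _ h, fun h' => absurd trivial h'⟩
  · simp only [h, if_false]
    exact ⟨hσ _ _ h, fun _ => trivial⟩

theorem winPlay_of_cons (Γ : GameGraph V) (hΓ : Γ.NoDead) {σ : Strat V} {v : V} {ω : ℕ → V}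
    (h : Γ.Cons σ v ω) :
    ∃ τ, Γ.ValidFor Player.one τ ∧ Γ.winPlay Player.two σ τ v = ω := by
  choose f hf using hΓ
  refine ⟨fun l u => if Γ.E u (ω (l.length + 1)) then ω (l.length + 1) else f u, ?_, ?_⟩
  · intro l u _
    dsimp only
    split_ifs with h1
    · exact h1
    · exact hf u
  · set τ : Strat V := fun l u => if Γ.E u (ω (l.length + 1)) then ω (l.length + 1) else f u
      with hτ
    show Γ.play τ σ v = ω
    funext n
    induction n using Nat.strong_induction_on with
    | _ n ih =>
      cases n with
      | zero => exact h.1.symm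
      | succ n =>
        rw [play_succ, ih n (by omega),
          gHist_congr (ω' := ω) (fun m hm => ih m (by omega))]
        unfold GameGraph.step
        by_cases hp : ω n ∈ Γ.P1
        · rw [if_pos hp, hτ]
          dsimp only
          rw [gHist_length, if_pos (h.2 n).1]
        · rw [if_neg hp]
          exact ((h.2 n).2 hp).symm

theorem exists_cons (Γ : GameGraph V) (hΓ : Γ.NoDead) {σ : Strat V} (v : V)
    (hσ : Γ.ValidFor Player.two σ) : ∃ ω, Γ.Cons σ v ω := by
  choose f hf using hΓ
  exact ⟨_, cons_winPlay Γ (τ := fun _ u => f u) v hσ (fun _ u _ => hf u)⟩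

/-- Concatenation of two plays. -/
def gCat (ω ω' : ℕ → V) (n : ℕ) : ℕ → V := fun m => if m < n then ω m else ω' (m - n)

theorem gCat_add (ω ω' : ℕ → V) (n m : ℕ) : gCat ω ω' n (n + m) = ω' m := by
  simp [gCat]

theorem gCat_le {ω ω' : ℕ → V} {n m : ℕ} (h0 : ω' 0 = ω n) (h : m ≤ n) :
    gCat ω ω' n m = ω m := by
  unfold gCat
  split_ifs with h1
  · rfl
  · obtain rfl : m = n := by omega
    simpa using h0

theorem gHist_gCat_add (ω ω' : ℕ → V) (n m : ℕ) :
    gHist (gCat ω ω' n) (n + m) = gHist ω n ++ gHist ω' m := by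
  induction m with
  | zero =>
    simp only [Nat.add_zero]
    rw [gHist_congr (ω' := ω) (fun k hk => by simp [gCat, hk])]
    simp [gHist]
  | succ m ih =>
    rw [← Nat.add_assoc, gHist_succ, ih, gCat_add, gHist_succ, List.append_assoc]

theorem cons_gCat (Γ : GameGraph V) {σ : Strat V} {v : V} {ω ω' : ℕ → V} {n : ℕ}
    (h : Γ.Cons σ v ω) (h' : Γ.Cons (fun l => σ (gHist ω n ++ l)) (ω n) ω') :
    Γ.Cons σ v (gCat ω ω' n) := by
  refine ⟨(gCat_le h'.1 (Nat.zero_le n)).trans h.1, fun m => ?_⟩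
  rcases lt_or_ge m n with hm | hm
  · rw [gCat_le h'.1 hm.le, gCat_le h'.1 (show m + 1 ≤ n from hm),
      gHist_congr (ω' := ω) (fun k hk => gCat_le h'.1 (by omega))]
    exact h.2 m
  · obtain ⟨k, rfl⟩ := Nat.exists_eq_add_of_le hm
    rw [gHist_gCat_add, Nat.add_assoc, gCat_add, gCat_add]
    exact h'.2 k

theorem infOcc_inter_iff [Finite V] (ω : ℕ → V) (T : Set V) :
    (InfOcc ω ∩ T).Nonempty ↔ ∀ n, ∃ m, n ≤ m ∧ ω m ∈ T := by
  constructor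
  · rintro ⟨v, hv, hT⟩ n
    obtain ⟨m, hm, rfl⟩ := hv n
    exact ⟨m, hm, hT⟩
  · intro h
    by_contra hne
    have h1 : ∀ v : V, ∃ n, v ∈ T → ∀ m, n ≤ m → ω m ≠ v := by
      intro v
      by_cases hv : v ∈ T
      · have h2 : v ∉ InfOcc ω := fun h2 => hne ⟨v, h2, hv⟩
        simp only [InfOcc, Set.mem_setOf_eq, not_forall, not_exists, not_and] at h2
        obtain ⟨n, hn⟩ := h2
        exact ⟨n, fun _ => hn⟩
      · exact ⟨0, fun h => absurd h hv⟩
    choose N hN using h1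
    obtain ⟨B, hB⟩ := (Set.finite_range N).bddAbove
    obtain ⟨m, hm, hmT⟩ := h B
    exact hN (ω m) hmT m ((hB ⟨ω m, rfl⟩).trans hm) rfl

/-- Player 2 forces staying in `A` and visiting every `L t` infinitely often. -/
def GameGraph.Good (Γ : GameGraph V) {ι : Type} (L : ι → Set V) (A : Set V) (v : V) : Prop :=
  ∃ σ, Γ.ValidFor Player.two σ ∧ ∀ ω, Γ.Cons σ v ω →
    (∀ n, ω n ∈ A) ∧ ∀ t n, ∃ m, n ≤ m ∧ ω m ∈ L t

theorem validFor_shift (Γ : GameGraph V) {σ : Strat V} (hσ : Γ.ValidFor Player.two σ)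
    (l : List V) : Γ.ValidFor Player.two (fun l' => σ (l ++ l')) :=
  fun _ u hu => hσ _ u hu

theorem io_gCat {ω ω' : ℕ → V} {k : ℕ} {T : Set V}
    (h : ∀ n, ∃ m, n ≤ m ∧ gCat ω ω' k m ∈ T) : ∀ n, ∃ m, n ≤ m ∧ ω' m ∈ T := by
  intro n
  obtain ⟨m, hm, hT⟩ := h (k + n)
  obtain ⟨j, rfl⟩ := Nat.exists_eq_add_of_le ((Nat.le_add_right k n).trans hm)
  rw [gCat_add] at hT
  exact ⟨j, by omega, hT⟩

theorem good_stays (Γ : GameGraph V) {ι : Type} {L : ι → Set V} {A : Set V} {v : V}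
    {σ : Strat V} (hσ : Γ.ValidFor Player.two σ)
    (h : ∀ ω, Γ.Cons σ v ω → (∀ n, ω n ∈ A) ∧ ∀ t n, ∃ m, n ≤ m ∧ ω m ∈ L t)
    {ω : ℕ → V} (hω : Γ.Cons σ v ω) (n : ℕ) : Γ.Good L A (ω n) := by
  refine ⟨_, validFor_shift Γ hσ (gHist ω n), fun ω' hω' => ?_⟩
  obtain ⟨h1, h2⟩ := h _ (cons_gCat Γ hω hω')
  refine ⟨fun m => ?_, fun t => io_gCat (h2 t)⟩
  have := h1 (n + m)
  rwa [gCat_add] at this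

/-- Iterated extension of consistent plays. -/
theorem limit_play (Γ : GameGraph V) {k : ℕ} (hk : 0 < k) {U : Fin k → Set V} {v : V}
    {σ : Strat V} {ω₀ : ℕ → V} (h0 : Γ.Cons σ v ω₀)
    (hext : ∀ ω, Γ.Cons σ v ω → ∀ n ℓ, ∃ ω', Γ.Cons σ v ω' ∧ (∀ m ≤ n, ω' m = ω m) ∧
      ∃ m, n ≤ m ∧ ω' m ∈ U ℓ) :
    ∃ ω, Γ.Cons σ v ω ∧ ∀ ℓ n, ∃ m, n ≤ m ∧ ω m ∈ U ℓ := by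
  have hstep : ∀ (q : {ω : ℕ → V // Γ.Cons σ v ω} × ℕ) (ℓ : Fin k),
      ∃ q' : {ω : ℕ → V // Γ.Cons σ v ω} × ℕ, (∀ m ≤ q.2, q'.1.1 m = q.1.1 m) ∧
        q.2 < q'.2 ∧ ∃ m, q.2 ≤ m ∧ m ≤ q'.2 ∧ q'.1.1 m ∈ U ℓ := by
    rintro ⟨⟨ω, hω⟩, n⟩ ℓ
    obtain ⟨ω', hω', he, m, hm, hU⟩ := hext ω hω n ℓ
    exact ⟨⟨⟨ω', hω'⟩, m + 1⟩, he, Nat.lt_succ_of_le hm, m, hm, Nat.le_succ m, hU⟩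
  choose nxt hn1 hn2 hn3 using hstep
  let s : ℕ → {ω : ℕ → V // Γ.Cons σ v ω} × ℕ := fun i =>
    Nat.rec (⟨ω₀, h0⟩, 0) (fun i q => nxt q ⟨i % k, Nat.mod_lt _ hk⟩) i
  have hs : ∀ i, s (i + 1) = nxt (s i) ⟨i % k, Nat.mod_lt _ hk⟩ := fun i => rfl
  have hmono : StrictMono (fun i => (s i).2) := by
    apply strictMono_nat_of_lt_succ
    intro i
    rw [hs]
    exact hn2 _ _
  have hge : ∀ i, i ≤ (s i).2 := fun i => hmono.le_apply (x := i)
  have hagree : ∀ i j, i ≤ j → ∀ m ≤ (s i).2, (s j).1.1 m = (s i).1.1 m := by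
    intro i j hij
    induction j, hij using Nat.le_induction with
    | base => intros; rfl
    | succ j hij ih =>
      intro m hm
      rw [hs, hn1 _ _ m (hm.trans (hmono.monotone hij)), ih m hm]
  let ω : ℕ → V := fun m => (s m).1.1 m
  have hω : ∀ i m, m ≤ (s i).2 → ω m = (s i).1.1 m := by
    intro i m hm
    rcases le_total i m with h | h
    · exact hagree i m h m hm
    · exact (hagree m i h m (hge m)).symm
  refine ⟨ω, ⟨(s 0).1.2.1, fun n => ?_⟩, fun ℓ n => ?_⟩
  · have h1 := hω (n + 1) n ((Nat.le_succ n).trans (hge _))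
    have h2 := hω (n + 1) (n + 1) (hge _)
    rw [h1, h2, gHist_congr (ω' := (s (n + 1)).1.1)
      (fun m hm => hω (n + 1) m (by have := hge (n + 1); omega))]
    exact (s (n + 1)).1.2.2 n
  · have hi : (⟨(ℓ.val + k * n) % k, Nat.mod_lt _ hk⟩ : Fin k) = ℓ := by
      apply Fin.ext
      simp [Nat.mod_eq_of_lt ℓ.isLt]
    obtain ⟨m, hm1, hm2, hm3⟩ := hn3 (s (ℓ.val + k * n)) ⟨(ℓ.val + k * n) % k, Nat.mod_lt _ hk⟩
    rw [← hs] at hm2 hm3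
    rw [hi] at hm3
    refine ⟨m, ?_, ?_⟩
    · have := hge (ℓ.val + k * n)
      have := Nat.le_mul_of_pos_left n hk
      omega
    · rw [hω (ℓ.val + k * n + 1) m hm2]
      exact hm3

/-- every player-2 dominion `D` of a GR(1) game contains a
player-2 dominion `D' ⊆ D` avoiding some guarantee set `U ℓ`. -/
theorem gr1_dominion_has_sub_dominion_avoiding_U {V : Type u} [Finite V]
    (Γ : GameGraph V) (hΓ : Γ.NoDead) {k₁ k₂ : ℕ}
    (L : Fin k₁ → Set V) (U : Fin k₂ → Set V) (D : Set V)
    (hD : Γ.Dominion Player.two (GR1Obj L U) D) :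
    ∃ D' ⊆ D, ∃ ℓ : Fin k₂, D' ∩ U ℓ = ∅ ∧
      Γ.Dominion Player.two (GR1Obj L U) D' := by
  obtain ⟨⟨v, hv⟩, hD⟩ := hD
  by_cases hX : ∃ ℓ : Fin k₂, ∃ v, Γ.Good L (D \ U ℓ) v
  · obtain ⟨ℓ, hne⟩ := hX
    have hsub : ∀ w, Γ.Good L (D \ U ℓ) w → w ∈ D \ U ℓ := by
      rintro w ⟨σ, hσ, h⟩
      obtain ⟨ω, hω⟩ := exists_cons Γ hΓ w hσ
      have := (h ω hω).1 0
      rwa [hω.1] at this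
    refine ⟨{w | Γ.Good L (D \ U ℓ) w}, fun w hw => (hsub w hw).1, ℓ, ?_, hne, ?_⟩
    · ext w
      simp only [Set.mem_inter_iff, Set.mem_setOf_eq, Set.mem_empty_iff_false, iff_false, not_and]
      exact fun hw => (hsub w hw).2
    · rintro w ⟨σ, hσ, h⟩
      refine ⟨σ, hσ, fun τ hτ => ?_⟩
      have hc := cons_winPlay Γ w hσ hτ
      refine ⟨?_, fun n => good_stays Γ hσ h hc n⟩
      show Γ.winPlay Player.two σ τ w ∉ GR1Obj L U
      intro hG
      obtain ⟨h1, h2⟩ := h _ hc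
      have h3 := hG (fun t => (infOcc_inter_iff _ _).2 (h2 t)) ℓ
      obtain ⟨m, _, hm⟩ := (infOcc_inter_iff _ _).1 h3 0
      exact (h1 m).2 hm
  · exfalso
    obtain ⟨σ, hσ, hw⟩ := hD v hv
    have hw' : ∀ ω, Γ.Cons σ v ω → ω ∉ GR1Obj L U ∧ ∀ n, ω n ∈ D := by
      intro ω hω
      obtain ⟨τ, hτ, rfl⟩ := winPlay_of_cons Γ hΓ hω
      exact hw τ hτ
    have hL : ∀ ω, Γ.Cons σ v ω → ∀ t n, ∃ m, n ≤ m ∧ ω m ∈ L t := by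
      intro ω hω t
      by_contra hcon
      exact (hw' ω hω).1 fun hall => absurd ((infOcc_inter_iff _ _).1 (hall t)) hcon
    obtain ⟨ω₀, h0⟩ := exists_cons Γ hΓ v hσ
    have hk : 0 < k₂ := by
      rcases Nat.eq_zero_or_pos k₂ with rfl | h
      · exact absurd (fun _ ℓ => ℓ.elim0) (hw' ω₀ h0).1
      · exact h
    obtain ⟨ω, hω, hU⟩ := limit_play Γ hk (U := U) h0 (by
      intro ω hω n ℓ
      by_contra hcon
      apply hX
      refine ⟨ℓ, ω n, _, validFor_shift Γ hσ (gHist ω n), fun ω' hω' => ?_⟩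
      have hc := cons_gCat Γ hω hω'
      refine ⟨fun m => ⟨?_, fun hm => ?_⟩, fun t => io_gCat (hL _ hc t)⟩
      · have := (hw' _ hc).2 (n + m)
        rwa [gCat_add] at this
      · exact hcon ⟨_, hc, fun j hj => gCat_le hω'.1 hj, n + m, Nat.le_add_right n m,
          by rwa [gCat_add]⟩)
    exact (hw' ω hω).1 fun _ ℓ => (infOcc_inter_iff _ _).2 (hU ℓ)
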